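/- arXiv:2404.03452 — 2 statements merged into one kernel-verified Lean document; each statement's English description precedes it below -/
import Mathlib

section
/- For a compactly supported function w : ℝ² → ℝ that is absolutely continuous in each variable with integrable partial derivatives, ‖w‖_{L²(ℝ²)} ≤ ‖∂w/∂x₁‖_{L¹(ℝ²)}^{1/2} · ‖∂w/∂x₂‖_{L¹(ℝ²)}^{1/2}. -/
open MeasureTheory Real

/-- A compactly supported `C¹` function on the line is bounded by the `L¹` norm of its
derivative. -/
theorem HasCompactSupport.abs_le_integral_abs_deriv {f : ℝ → ℝ} (hf : ContDiff ℝ 1 f)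
    (h2f : HasCompactSupport f) (x : ℝ) : |f x| ≤ ∫ t, |deriv f t| := by
  rw [← h2f.integral_Iic_deriv_eq hf x]
  refine abs_integral_le_integral_abs.trans
    (setIntegral_le_integral ?_ (Filter.Eventually.of_forall fun _ => abs_nonneg _))
  exact ((hf.continuous_deriv le_rfl).integrable_of_hasCompactSupport h2f.deriv).abs

/-- A compactly supported `C¹` function on the plane is bounded at each point by the `L¹` norm of
its first partial derivative along the horizontal line through that point. -/
theorem HasCompactSupport.abs_le_integral_abs_fderiv_fst {w : ℝ × ℝ → ℝ} (hw : ContDiff ℝ 1 w)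
    (hsupp : HasCompactSupport w) (x y : ℝ) :
    |w (x, y)| ≤ ∫ t, |fderiv ℝ w (t, y) (1, 0)| := by
  have hderiv : deriv (fun t => w (t, y)) = fun t => fderiv ℝ w (t, y) (1, 0) := by
    ext t
    exact ((hw.differentiable one_ne_zero (t, y)).hasFDerivAt.comp_hasDerivAt t
      ((hasDerivAt_id t).prodMk (hasDerivAt_const t y))).deriv
  have hemb : Topology.IsClosedEmbedding fun t : ℝ => (t, y) :=
    Function.LeftInverse.isClosedEmbedding (f := Prod.fst) (fun _ => rfl) continuous_fst
      (by fun_prop)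
  have h := HasCompactSupport.abs_le_integral_abs_deriv (f := fun t => w (t, y))
    (hw.comp (contDiff_id.prodMk contDiff_const)) (hsupp.comp_isClosedEmbedding hemb) x
  rwa [hderiv] at h

/-- A compactly supported `C¹` function on the plane is bounded at each point by the `L¹` norm of
its second partial derivative along the vertical line through that point. -/
theorem HasCompactSupport.abs_le_integral_abs_fderiv_snd {w : ℝ × ℝ → ℝ} (hw : ContDiff ℝ 1 w)
    (hsupp : HasCompactSupport w) (x y : ℝ) :
    |w (x, y)| ≤ ∫ t, |fderiv ℝ w (x, t) (0, 1)| := by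
  have hderiv : deriv (fun t => w (x, t)) = fun t => fderiv ℝ w (x, t) (0, 1) := by
    ext t
    exact ((hw.differentiable one_ne_zero (x, t)).hasFDerivAt.comp_hasDerivAt t
      ((hasDerivAt_const t x).prodMk (hasDerivAt_id t))).deriv
  have hemb : Topology.IsClosedEmbedding fun t : ℝ => (x, t) :=
    Function.LeftInverse.isClosedEmbedding (f := Prod.snd) (fun _ => rfl) continuous_snd
      (by fun_prop)
  have h := HasCompactSupport.abs_le_integral_abs_deriv (f := fun t => w (x, t))
    (hw.comp (contDiff_const.prodMk contDiff_id)) (hsupp.comp_isClosedEmbedding hemb) y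
  rwa [hderiv] at h

theorem stmt_3 (w : ℝ × ℝ → ℝ)
    (hw : ContDiff ℝ 1 w) (hsupp : HasCompactSupport w)
    (h1 : Integrable (fun z : ℝ × ℝ => |fderiv ℝ w z (1, 0)|))
    (h2 : Integrable (fun z : ℝ × ℝ => |fderiv ℝ w z (0, 1)|)) :
    (∫ z : ℝ × ℝ, (w z) ^ 2) ^ ((1 : ℝ) / 2) ≤
      (∫ z : ℝ × ℝ, |fderiv ℝ w z (1, 0)|) ^ ((1 : ℝ) / 2) *
        (∫ z : ℝ × ℝ, |fderiv ℝ w z (0, 1)|) ^ ((1 : ℝ) / 2) := by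
  rw [← mul_rpow (integral_nonneg fun _ => abs_nonneg _) (integral_nonneg fun _ => abs_nonneg _)]
  refine rpow_le_rpow (integral_nonneg fun _ => sq_nonneg _) ?_ (by norm_num)
  rw [Measure.volume_eq_prod] at h1 h2 ⊢
  rw [integral_prod_symm _ h1, integral_prod _ h2, mul_comm, ← integral_prod_mul]
  refine integral_mono_of_nonneg (Filter.Eventually.of_forall fun _ => sq_nonneg _)
    (h2.integral_prod_left.mul_prod h1.integral_prod_right)
    (Filter.Eventually.of_forall fun ⟨x, y⟩ => ?_)
  calc w (x, y) ^ 2 = |w (x, y)| * |w (x, y)| := by rw [abs_mul_abs_self, sq]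
    _ ≤ (∫ t, |fderiv ℝ w (x, t) (0, 1)|) * ∫ t, |fderiv ℝ w (t, y) (1, 0)| :=
      mul_le_mul (hsupp.abs_le_integral_abs_fderiv_snd hw x y)
        (hsupp.abs_le_integral_abs_fderiv_fst hw x y) (abs_nonneg _)
        (integral_nonneg fun _ => abs_nonneg _)
end

section
/- Let 2 < q < 4 and u ∈ H¹(ℝ²) ∩ L^q(ℝ²). For every ε > 0 there is C_ε > 0 (independent of u) such that ∫∫ log(1+2/|x-y|) u(x)² u(y)² dx dy ≤ C ε^q ‖u‖_q^{2q} + C ε^{(5q-2)(q-2)/((4-q)(q-1))} ‖∇u‖₂² + C_ε ‖u‖₂^{2(3q-4)/(3(q-2))}. -/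
open MeasureTheory Real ENNReal

theorem ofReal_le_lintegral_enorm_deriv {h : ℝ → ℝ} (hd : Differentiable ℝ h)
    (hfin : ∫⁻ t in Set.Ioi 1, ENNReal.ofReal (h t) ≠ ∞) :
    ENNReal.ofReal (h 1) ≤ ∫⁻ t in Set.Ioi 1, ‖deriv h t‖ₑ := by
  by_contra! hlt
  have hI : ∫⁻ t in Set.Ioi 1, ‖deriv h t‖ₑ ≠ ∞ := hlt.ne_top
  set I := (∫⁻ t in Set.Ioi 1, ‖deriv h t‖ₑ).toReal
  have hint : IntegrableOn (deriv h) (Set.Ioi 1) :=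
    ⟨(measurable_deriv h).aestronglyMeasurable, hI.lt_top⟩
  have hIlt : I < h 1 := by
    rw [← ENNReal.ofReal_toReal hI] at hlt
    exact (ENNReal.ofReal_lt_ofReal_iff'.1 hlt).1
  have hlow : ∀ T ∈ Set.Ioi (1 : ℝ), h 1 - I ≤ h T := by
    intro T hT
    have hT' : (1 : ℝ) ≤ T := le_of_lt hT
    have hsub := hint.mono_set (Set.Ioc_subset_Ioi_self : Set.Ioc 1 T ⊆ Set.Ioi 1)
    have hftc := intervalIntegral.integral_eq_sub_of_hasDerivAt
      (fun x _ => (hd x).hasDerivAt) ((intervalIntegrable_iff_integrableOn_Ioc_of_le hT').2 hsub)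
    have h1 : ‖∫ t in (1 : ℝ)..T, deriv h t‖ ≤ I := by
      rw [intervalIntegral.integral_of_le hT']
      refine (norm_integral_le_lintegral_norm _).trans ?_
      simp only [ofReal_norm]
      exact ENNReal.toReal_mono hI (lintegral_mono_set Set.Ioc_subset_Ioi_self)
    rw [hftc, Real.norm_eq_abs] at h1
    linarith [neg_abs_le (h T - h 1)]
  apply hfin
  have hc : 0 < h 1 - I := by linarith
  refine top_unique ?_
  calc (∞ : ℝ≥0∞) = ∫⁻ _ in Set.Ioi (1 : ℝ), ENNReal.ofReal (h 1 - I) := by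
        rw [setLIntegral_const, Real.volume_Ioi, ENNReal.mul_top (by simpa using hc)]
    _ ≤ _ := setLIntegral_mono' measurableSet_Ioi fun t ht => ENNReal.ofReal_le_ofReal (hlow t ht)

theorem lintegral_comp_smul_plane {F : EuclideanSpace ℝ (Fin 2) → ℝ≥0∞} (hF : Measurable F)
    {t : ℝ} (ht : 0 < t) :
    ∫⁻ x, F (t • x) = ENNReal.ofReal ((t ^ 2)⁻¹) * ∫⁻ x, F x := by
  have h := Measure.map_addHaar_smul (volume : Measure (EuclideanSpace ℝ (Fin 2))) ht.ne'
  rw [← lintegral_map hF (measurable_const_smul t), h, lintegral_smul_measure]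
  simp [abs_of_pos ht]

theorem lintegral_lintegral_Ioi_comp_smul {F : EuclideanSpace ℝ (Fin 2) → ℝ≥0∞}
    (hF : Measurable F) :
    ∫⁻ x, ∫⁻ t in Set.Ioi (1 : ℝ), F (t • x) = ∫⁻ x, F x := by
  have hm : Measurable fun p : EuclideanSpace ℝ (Fin 2) × ℝ => F (p.2 • p.1) :=
    hF.comp (measurable_snd.smul measurable_fst)
  rw [lintegral_lintegral_swap hm.aemeasurable,
    setLIntegral_congr_fun measurableSet_Ioi
      (g := fun t => ENNReal.ofReal ((t ^ 2)⁻¹) * ∫⁻ x, F x)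
      fun t ht => lintegral_comp_smul_plane hF (zero_lt_one.trans ht),
    lintegral_mul_const _ (by fun_prop)]
  have hrp : ∀ t ∈ Set.Ioi (1 : ℝ), (t ^ 2)⁻¹ = t ^ (-2 : ℝ) := fun t ht => by
    rw [Real.rpow_neg (zero_le_one.trans (le_of_lt ht))]; norm_cast
  have : ∫⁻ t in Set.Ioi (1 : ℝ), ENNReal.ofReal ((t ^ 2)⁻¹) = 1 := by
    rw [setLIntegral_congr_fun measurableSet_Ioi (g := fun t => ENNReal.ofReal (t ^ (-2 : ℝ)))
      fun t ht => by simp only [hrp t ht],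
      ← ofReal_integral_eq_lintegral_ofReal (integrableOn_Ioi_rpow_of_lt (by norm_num) one_pos)
      (ae_restrict_of_forall_mem measurableSet_Ioi fun t ht =>
        Real.rpow_nonneg (zero_le_one.trans (le_of_lt ht)) _),
      integral_Ioi_rpow_of_lt (by norm_num) one_pos]
    norm_num
  rw [this, one_mul]

theorem hardy_plane {u : EuclideanSpace ℝ (Fin 2) → ℝ} (hd : Differentiable ℝ u)
    (hM : ∫⁻ x, ‖u x‖ₑ ^ 2 ≠ ∞) :
    ∫⁻ x, ‖u x‖ₑ ^ 2 * ‖x‖ₑ⁻¹ ≤ 2 * ∫⁻ x, ‖u x‖ₑ * ‖fderiv ℝ u x‖ₑ := by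
  have hu : Measurable u := hd.continuous.measurable
  have hu' : Measurable (fderiv ℝ u) := measurable_fderiv ℝ u
  have hae : ∀ᵐ x, ∫⁻ t in Set.Ioi (1 : ℝ), ‖u (t • x)‖ₑ ^ 2 < ∞ := by
    have hm : Measurable fun p : EuclideanSpace ℝ (Fin 2) × ℝ => ‖u (p.2 • p.1)‖ₑ ^ 2 :=
      (hu.comp (measurable_snd.smul measurable_fst)).enorm.pow_const 2
    refine ae_lt_top hm.lintegral_prod_right' ?_
    rwa [lintegral_lintegral_Ioi_comp_smul (F := fun x => ‖u x‖ₑ ^ 2) (by fun_prop)]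
  rw [← lintegral_const_mul _ (by fun_prop),
    ← lintegral_lintegral_Ioi_comp_smul (F := fun x => 2 * (‖u x‖ₑ * ‖fderiv ℝ u x‖ₑ))
      (by fun_prop)]
  refine lintegral_mono_ae (hae.mono fun x hx => ?_)
  have hder : ∀ t : ℝ, HasDerivAt (fun t : ℝ => u (t • x) ^ 2)
      (2 * u (t • x) * fderiv ℝ u (t • x) x) t := by
    intro t
    have h1 : HasDerivAt (fun t : ℝ => t • x) x t := by
      simpa using (hasDerivAt_id t).smul_const x
    have h2 := ((hd (t • x)).hasFDerivAt.comp_hasDerivAt t h1).pow 2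
    simpa [Pi.pow_def, Function.comp_def] using h2
  have hsq : ∀ a : ℝ, ENNReal.ofReal (a ^ 2) = ‖a‖ₑ ^ 2 := fun a => by
    rw [← enorm_pow, Real.enorm_of_nonneg (sq_nonneg a)]
  have h1 := ofReal_le_lintegral_enorm_deriv (fun t => (hder t).differentiableAt)
    (by simpa only [hsq] using hx.ne)
  simp only [one_smul, hsq] at h1
  have h2 : ∫⁻ t in Set.Ioi (1 : ℝ), ‖deriv (fun t : ℝ => u (t • x) ^ 2) t‖ₑ ≤
      (∫⁻ t in Set.Ioi (1 : ℝ), 2 * (‖u (t • x)‖ₑ * ‖fderiv ℝ u (t • x)‖ₑ)) * ‖x‖ₑ := by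
    have hs : Measurable fun t : ℝ => t • x := by fun_prop
    rw [← lintegral_mul_const _ (by fun_prop)]
    refine lintegral_mono fun t => ?_
    rw [(hder t).deriv, enorm_mul, enorm_mul, mul_assoc, mul_assoc, mul_assoc]
    have : ‖(2 : ℝ)‖ₑ = 2 := by rw [Real.enorm_of_nonneg zero_le_two, ENNReal.ofReal_ofNat]
    rw [this]
    gcongr
    exact ContinuousLinearMap.le_opENorm _ _
  calc ‖u x‖ₑ ^ 2 * ‖x‖ₑ⁻¹ ≤ _ * ‖x‖ₑ * ‖x‖ₑ⁻¹ := by gcongr; exact h1.trans h2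
    _ ≤ _ := by
      rw [mul_assoc]
      exact mul_le_of_le_one_right' (ENNReal.mul_inv_le_one _)

theorem lintegral_one_add_norm_rpow_mul_inv_ne_top {σ : ℝ} (hσ : 1 < σ) :
    ∫⁻ x : EuclideanSpace ℝ (Fin 2), ENNReal.ofReal ((1 + ‖x‖) ^ (-σ)) * ‖x‖ₑ⁻¹ ≠ ∞ := by
  have h1 : Integrable (fun x : EuclideanSpace ℝ (Fin 2) => (1 + ‖x‖) ^ (-σ) * ‖x‖⁻¹) := by
    refine (integrable_fun_norm_addHaar (volume : Measure (EuclideanSpace ℝ (Fin 2)))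
      (f := fun r : ℝ => (1 + r) ^ (-σ) * r⁻¹)).2 ?_
    have h2 : IntegrableOn (fun r : ℝ => (1 + ‖r‖) ^ (-σ)) (Set.Ioi 0) :=
      (integrable_one_add_norm (by simpa using hσ)).integrableOn
    refine h2.congr_fun (fun r hr => ?_) measurableSet_Ioi
    have hr : 0 < r := hr
    simp only [Real.norm_of_nonneg hr.le, finrank_euclideanSpace, Fintype.card_fin, smul_eq_mul]
    field_simp
    norm_num
  have h2 := h1.2.ne
  refine ne_of_eq_of_ne (lintegral_congr_ae ?_) h2
  have : ∀ᵐ x : EuclideanSpace ℝ (Fin 2), x ≠ 0 := by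
    simp [ae_iff]
  filter_upwards [this] with x hx
  rw [enorm_mul, Real.enorm_of_nonneg (by positivity), enorm_inv (norm_ne_zero_iff.2 hx),
    enorm_norm]

theorem rpow_le_rpow_sub_two_mul_sq_add {a T β : ℝ} (ha : 0 ≤ a) (hT : 0 < T) (hβ₀ : 0 ≤ β)
    (hβ : β ≤ 2) : a ^ β ≤ T ^ (β - 2) * a ^ 2 + T ^ β := by
  rcases le_or_gt a T with h | h
  · have := Real.rpow_le_rpow ha h hβ₀
    have : 0 ≤ T ^ (β - 2) * a ^ 2 := by positivity
    linarith
  · have ha' : 0 < a := hT.trans h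
    have h1 : a ^ (β - 2) ≤ T ^ (β - 2) :=
      Real.rpow_le_rpow_of_nonpos hT h.le (by linarith)
    have h2 : a ^ β = a ^ (β - 2) * a ^ 2 := by
      rw [← Real.rpow_natCast, ← Real.rpow_add ha']; norm_num
    have h3 : 0 ≤ T ^ β := by positivity
    rw [h2]
    nlinarith [mul_le_mul_of_nonneg_right h1 (sq_nonneg a)]

theorem rpow_le_weighted_sq_add {a r ρ τ β : ℝ} (ha : 0 ≤ a) (hr : 0 ≤ r) (hρ : 0 < ρ)
    (hτ : 0 < τ) (hβ₀ : 0 ≤ β) (hβ : β < 2) :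
    a ^ β ≤ τ ^ (β - 2) * (1 + ρ⁻¹ * r) * a ^ 2 +
      τ ^ β * (1 + ρ⁻¹ * r) ^ (-(β / (2 - β))) := by
  have hb : 0 < 2 - β := by linarith
  have hs : 0 < 1 + ρ⁻¹ * r := by positivity
  have h := rpow_le_rpow_sub_two_mul_sq_add ha
    (T := τ * (1 + ρ⁻¹ * r) ^ (-(1 / (2 - β)))) (by positivity) hβ₀ hβ.le
  rw [Real.mul_rpow hτ.le (by positivity), Real.mul_rpow hτ.le (by positivity),
    ← Real.rpow_mul hs.le, ← Real.rpow_mul hs.le] at h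
  have e1 : -(1 / (2 - β)) * (β - 2) = 1 := by field_simp; ring
  have e2 : -(1 / (2 - β)) * β = -(β / (2 - β)) := by field_simp
  rwa [e1, e2, Real.rpow_one] at h

theorem lintegral_enorm_rpow_mul_inv_le {u : EuclideanSpace ℝ (Fin 2) → ℝ} (hu : Measurable u)
    {ρ τ β : ℝ} (hρ : 0 < ρ) (hτ : 0 < τ) (hβ₀ : 0 < β) (hβ : β < 2) :
    ∫⁻ x, ‖u x‖ₑ ^ β * ‖x‖ₑ⁻¹ ≤
      ENNReal.ofReal (τ ^ (β - 2)) *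
        ((∫⁻ x, ‖u x‖ₑ ^ 2 * ‖x‖ₑ⁻¹) + ENNReal.ofReal ρ⁻¹ * ∫⁻ x, ‖u x‖ₑ ^ 2) +
      ENNReal.ofReal (τ ^ β) * (ENNReal.ofReal ρ * ∫⁻ x : EuclideanSpace ℝ (Fin 2),
        ENNReal.ofReal ((1 + ‖x‖) ^ (-(β / (2 - β)))) * ‖x‖ₑ⁻¹) := by
  set F : EuclideanSpace ℝ (Fin 2) → ℝ≥0∞ :=
    fun x => ENNReal.ofReal ((1 + ‖x‖) ^ (-(β / (2 - β)))) * ‖x‖ₑ⁻¹ with hF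
  have hFm : Measurable F := by fun_prop
  have hscale : ENNReal.ofReal ρ * ∫⁻ x, F x = ENNReal.ofReal ρ⁻¹ * ∫⁻ x, F (ρ⁻¹ • x) := by
    rw [lintegral_comp_smul_plane hFm (inv_pos.2 hρ), ← mul_assoc,
      ← ENNReal.ofReal_mul (inv_nonneg.2 hρ.le)]
    congr 2
    field_simp
  have hFs : ∀ x, ENNReal.ofReal ρ⁻¹ * F (ρ⁻¹ • x) =
      ENNReal.ofReal ((1 + ρ⁻¹ * ‖x‖) ^ (-(β / (2 - β)))) * ‖x‖ₑ⁻¹ := by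
    intro x
    have hρ' : ENNReal.ofReal ρ⁻¹ ≠ 0 := by simpa using hρ
    simp only [hF]
    rw [norm_smul, enorm_smul, Real.norm_of_nonneg (inv_nonneg.2 hρ.le),
      Real.enorm_of_nonneg (inv_nonneg.2 hρ.le),
      ENNReal.mul_inv (Or.inl hρ') (Or.inl ENNReal.ofReal_ne_top), mul_left_comm,
      ← mul_assoc (ENNReal.ofReal ρ⁻¹), ENNReal.mul_inv_cancel hρ' ENNReal.ofReal_ne_top, one_mul]
  rw [hscale, ← lintegral_const_mul _ (by fun_prop), ← lintegral_const_mul _ (by fun_prop),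
    ← lintegral_const_mul _ (by fun_prop), ← lintegral_add_left (by fun_prop),
    ← lintegral_const_mul _ (by fun_prop), ← lintegral_add_left (by fun_prop)]
  refine lintegral_mono fun x => ?_
  simp only [hFs]
  have h := ENNReal.ofReal_le_ofReal (rpow_le_weighted_sq_add (norm_nonneg (u x)) (norm_nonneg x)
    hρ hτ hβ₀.le hβ)
  rw [ENNReal.ofReal_add (by positivity) (by positivity), ENNReal.ofReal_mul (by positivity),
    ENNReal.ofReal_mul (by positivity), ENNReal.ofReal_mul (by positivity),
    ENNReal.ofReal_add (by positivity) (by positivity), ENNReal.ofReal_mul (by positivity),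
    ← ENNReal.ofReal_rpow_of_nonneg (norm_nonneg _) hβ₀.le, ENNReal.ofReal_pow (norm_nonneg _),
    ofReal_norm, ofReal_norm, ENNReal.ofReal_one] at h
  refine (mul_le_mul_left h _).trans ?_
  calc _ = ENNReal.ofReal (τ ^ (β - 2)) * (‖u x‖ₑ ^ 2 * ‖x‖ₑ⁻¹ +
          ENNReal.ofReal ρ⁻¹ * (‖u x‖ₑ ^ 2 * (‖x‖ₑ * ‖x‖ₑ⁻¹))) +
        ENNReal.ofReal (τ ^ β) *
          (ENNReal.ofReal ((1 + ρ⁻¹ * ‖x‖) ^ (-(β / (2 - β)))) * ‖x‖ₑ⁻¹) := by ring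
    _ ≤ _ := by
      gcongr
      exact mul_le_of_le_one_right' (ENNReal.mul_inv_le_one _)

theorem lintegral_mul_le_rpow_half {α : Type*} [MeasurableSpace α] {μ : Measure α}
    {f g : α → ℝ≥0∞} (hf : Measurable f) (hg : Measurable g) :
    ∫⁻ x, f x * g x ∂μ ≤ (∫⁻ x, f x ^ 2 ∂μ) ^ (1 / 2 : ℝ) * (∫⁻ x, g x ^ 2 ∂μ) ^ (1 / 2 : ℝ) := by
  have h := ENNReal.lintegral_mul_norm_pow_le (μ := μ) (f := fun x => f x ^ 2)
    (g := fun x => g x ^ 2) (by fun_prop) (by fun_prop) (p := 1 / 2) (q := 1 / 2)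
    (by norm_num) (by norm_num) (by norm_num)
  have hs : ∀ a : ℝ≥0∞, (a ^ 2) ^ (1 / 2 : ℝ) = a := fun a => by
    rw [← ENNReal.rpow_natCast, ← ENNReal.rpow_mul]; norm_num
  simpa only [hs] using h

theorem exists_riesz_potential_bound {β : ℝ} (hβ₁ : 1 < β) (hβ : β < 2) :
    ∃ C > (0 : ℝ), ∀ u : EuclideanSpace ℝ (Fin 2) → ℝ, Differentiable ℝ u → ∀ m > (0 : ℝ),
      ∀ g > (0 : ℝ), ∫⁻ x, ‖u x‖ₑ ^ 2 = ENNReal.ofReal m →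
      ∫⁻ x, ‖fderiv ℝ u x‖ₑ ^ 2 = ENNReal.ofReal g →
      ∀ x, ∫⁻ y, ‖u y‖ₑ ^ β * ‖x - y‖ₑ⁻¹ ≤
        ENNReal.ofReal (C * (m ^ (1 / 2 : ℝ) * g ^ ((β - 1) / 2))) := by
  have hσ : 1 < β / (2 - β) := by rw [lt_div_iff₀] <;> linarith
  have hJ := lintegral_one_add_norm_rpow_mul_inv_ne_top hσ
  set J := (∫⁻ x : EuclideanSpace ℝ (Fin 2),
    ENNReal.ofReal ((1 + ‖x‖) ^ (-(β / (2 - β)))) * ‖x‖ₑ⁻¹).toReal with hJdef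
  have hJ₀ : 0 ≤ J := ENNReal.toReal_nonneg
  refine ⟨3 + J, by positivity, fun u hd m hm g hg hM hG x => ?_⟩
  set v : EuclideanSpace ℝ (Fin 2) → ℝ := fun y => u (y + x) with hv
  have hvd : Differentiable ℝ v := hd.comp (differentiable_id.add_const x)
  have hMv : ∫⁻ y, ‖v y‖ₑ ^ 2 = ENNReal.ofReal m := by
    rw [← hM]; exact lintegral_add_right_eq_self (fun y => ‖u y‖ₑ ^ 2) x
  have hGv : ∫⁻ y, ‖fderiv ℝ v y‖ₑ ^ 2 = ENNReal.ofReal g := by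
    rw [← hG]
    simp only [hv, fderiv_comp_add_right]
    exact lintegral_add_right_eq_self (fun y => ‖fderiv ℝ u y‖ₑ ^ 2) x
  have hshift : ∫⁻ y, ‖u y‖ₑ ^ β * ‖x - y‖ₑ⁻¹ = ∫⁻ y, ‖v y‖ₑ ^ β * ‖y‖ₑ⁻¹ := by
    rw [← lintegral_add_right_eq_self (fun y => ‖u y‖ₑ ^ β * ‖x - y‖ₑ⁻¹) x]
    simp [hv]
  have hhalf := lintegral_mul_le_rpow_half (μ := volume)
    (f := fun y => ‖v y‖ₑ) (g := fun y => ‖fderiv ℝ v y‖ₑ)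
    hvd.continuous.measurable.enorm (measurable_fderiv ℝ v).enorm
  rw [hMv, hGv, ENNReal.ofReal_rpow_of_pos hm, ENNReal.ofReal_rpow_of_pos hg,
    ← ENNReal.ofReal_mul (by positivity)] at hhalf
  have hH := hardy_plane hvd (by rw [hMv]; exact ENNReal.ofReal_ne_top)
  have hH' : ∫⁻ y, ‖v y‖ₑ ^ 2 * ‖y‖ₑ⁻¹ ≤
      ENNReal.ofReal (2 * (m ^ (1 / 2 : ℝ) * g ^ (1 / 2 : ℝ))) := by
    rw [ENNReal.ofReal_mul zero_le_two, ENNReal.ofReal_ofNat]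
    exact hH.trans (by gcongr)
  rw [hshift]
  refine (lintegral_enorm_rpow_mul_inv_le hvd.continuous.measurable
    (ρ := m ^ (1 / 2 : ℝ) * g ^ (-(1 / 2) : ℝ)) (τ := g ^ (1 / 2 : ℝ)) (by positivity)
    (by positivity) (zero_lt_one.trans hβ₁) hβ).trans ?_
  rw [hMv, ← ENNReal.ofReal_toReal hJ, ← hJdef]
  refine (add_le_add_left (mul_le_mul_right (add_le_add_left hH' _) _) _).trans ?_
  rw [← ENNReal.ofReal_mul (by positivity), ← ENNReal.ofReal_mul (by positivity),
    ← ENNReal.ofReal_mul (by positivity), ← ENNReal.ofReal_add (by positivity) (by positivity),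
    ← ENNReal.ofReal_mul (by positivity), ← ENNReal.ofReal_add (by positivity) (by positivity)]
  refine ENNReal.ofReal_le_ofReal (le_of_eq ?_)
  have em : (m ^ (1 / 2 : ℝ))⁻¹ * m = m ^ (1 / 2 : ℝ) := by
    rw [← Real.rpow_neg hm.le]
    nth_rewrite 2 [← Real.rpow_one m]
    rw [← Real.rpow_add hm]; norm_num
  have e0 : (m ^ (1 / 2 : ℝ) * g ^ (-(1 / 2) : ℝ))⁻¹ * m = m ^ (1 / 2 : ℝ) * g ^ (1 / 2 : ℝ) := by
    rw [mul_inv, mul_right_comm, em, Real.rpow_neg hg.le, inv_inv]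
  have e1 : (g ^ (1 / 2 : ℝ)) ^ (β - 2) * g ^ (1 / 2 : ℝ) = g ^ ((β - 1) / 2) := by
    rw [← Real.rpow_mul hg.le, ← Real.rpow_add hg]; ring_nf
  have e2 : (g ^ (1 / 2 : ℝ)) ^ β * g ^ (-(1 / 2) : ℝ) = g ^ ((β - 1) / 2) := by
    rw [← Real.rpow_mul hg.le, ← Real.rpow_add hg]; ring_nf
  rw [e0]
  linear_combination (3 * m ^ (1 / 2 : ℝ)) * e1 + (J * m ^ (1 / 2 : ℝ)) * e2

theorem sq_mul_sq_le_rpow_mul_rpow_add (a b : ℝ≥0∞) {β : ℝ} (hβ₀ : 0 ≤ β) (hβ : β ≤ 2) :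
    a ^ 2 * b ^ 2 ≤ a ^ (4 - β) * b ^ β + a ^ β * b ^ (4 - β) := by
  have key : ∀ a b : ℝ≥0∞, a ≤ b → a ^ 2 * b ^ 2 ≤ a ^ β * b ^ (4 - β) := by
    intro a b hab
    have h1 : a ^ 2 = a ^ β * a ^ (2 - β) := by
      rw [← ENNReal.rpow_add_of_nonneg _ _ hβ₀ (by linarith), ← ENNReal.rpow_natCast]
      norm_num
    have h2 : b ^ (4 - β) = b ^ (2 - β) * b ^ 2 := by
      rw [← ENNReal.rpow_natCast, ← ENNReal.rpow_add_of_nonneg _ _ (by linarith) (by simp)]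
      congr 1
      norm_num
      ring
    rw [h1, h2, mul_assoc]
    gcongr
  rcases le_total a b with h | h
  · exact (key a b h).trans le_add_self
  · rw [mul_comm (a ^ 2), mul_comm (a ^ (4 - β))]
    exact (key b a h).trans le_self_add

theorem ofReal_log_kernel_le (x y : EuclideanSpace ℝ (Fin 2)) (a b : ℝ) :
    ENNReal.ofReal (Real.log (1 + 2 / ‖x - y‖) * a ^ 2 * b ^ 2) ≤
      2 * (‖a‖ₑ ^ 2 * ‖b‖ₑ ^ 2 * ‖x - y‖ₑ⁻¹) := by
  have hsq : ∀ a : ℝ, ‖a‖ₑ ^ 2 = ENNReal.ofReal (a ^ 2) := fun a => by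
    rw [← enorm_pow, Real.enorm_of_nonneg (sq_nonneg a)]
  rcases eq_or_ne x y with rfl | hxy
  · simp
  have hr : 0 < ‖x - y‖ := norm_pos_iff.2 (sub_ne_zero.2 hxy)
  have hlog : Real.log (1 + 2 / ‖x - y‖) ≤ 2 * ‖x - y‖⁻¹ := by
    have := Real.log_le_sub_one_of_pos (show 0 < 1 + 2 / ‖x - y‖ by positivity)
    rw [← div_eq_mul_inv]; linarith
  calc _ ≤ ENNReal.ofReal (2 * (a ^ 2 * b ^ 2 * ‖x - y‖⁻¹)) := by
        refine ENNReal.ofReal_le_ofReal ?_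
        nlinarith [mul_le_mul_of_nonneg_right hlog (mul_nonneg (sq_nonneg a) (sq_nonneg b))]
    _ = _ := by
      rw [ENNReal.ofReal_mul zero_le_two, ENNReal.ofReal_mul (by positivity),
        ENNReal.ofReal_mul (by positivity), ENNReal.ofReal_inv_of_pos hr, ofReal_norm, hsq, hsq,
        ENNReal.ofReal_ofNat]

theorem lintegral_lintegral_log_kernel_le {u : EuclideanSpace ℝ (Fin 2) → ℝ} (hu : Measurable u)
    {β : ℝ} (hβ₀ : 0 ≤ β) (hβ : β ≤ 2) {B : ℝ≥0∞}
    (hB : ∀ x, ∫⁻ y, ‖u y‖ₑ ^ β * ‖x - y‖ₑ⁻¹ ≤ B) :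
    ∫⁻ x, ∫⁻ y, ENNReal.ofReal (Real.log (1 + 2 / ‖x - y‖) * (u x) ^ 2 * (u y) ^ 2) ≤
      4 * ((∫⁻ x, ‖u x‖ₑ ^ (4 - β)) * B) := by
  set P : EuclideanSpace ℝ (Fin 2) → EuclideanSpace ℝ (Fin 2) → ℝ≥0∞ :=
    fun x y => ‖u x‖ₑ ^ (4 - β) * (‖u y‖ₑ ^ β * ‖x - y‖ₑ⁻¹) with hP
  have hPm : Measurable (Function.uncurry P) := by
    simp only [hP, Function.uncurry_def]
    fun_prop
  have hPm' : Measurable (Function.uncurry fun x y => P y x) := hPm.comp measurable_swap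
  have hPle : ∫⁻ x, ∫⁻ y, P x y ≤ (∫⁻ x, ‖u x‖ₑ ^ (4 - β)) * B := by
    rw [← lintegral_mul_const _ (by fun_prop)]
    refine lintegral_mono fun x => ?_
    simp only [hP]
    rw [lintegral_const_mul _ (by fun_prop)]
    gcongr
    exact hB x
  have hswap : ∫⁻ x, ∫⁻ y, P y x = ∫⁻ x, ∫⁻ y, P x y :=
    lintegral_lintegral_swap hPm'.aemeasurable
  calc _ ≤ ∫⁻ x, ∫⁻ y, 2 * (P x y + P y x) := by
        refine lintegral_mono fun x => lintegral_mono fun y => ?_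
        refine (ofReal_log_kernel_le x y (u x) (u y)).trans ?_
        simp only [hP]
        rw [show ‖y - x‖ₑ = ‖x - y‖ₑ from enorm_sub_rev y x]
        calc _ ≤ 2 * ((‖u x‖ₑ ^ (4 - β) * ‖u y‖ₑ ^ β + ‖u x‖ₑ ^ β * ‖u y‖ₑ ^ (4 - β)) *
              ‖x - y‖ₑ⁻¹) := by
              gcongr
              exact sq_mul_sq_le_rpow_mul_rpow_add _ _ hβ₀ hβ
          _ = _ := by ring
    _ = 2 * ((∫⁻ x, ∫⁻ y, P x y) + ∫⁻ x, ∫⁻ y, P y x) := by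
        rw [← lintegral_add_left hPm.lintegral_prod_right,
          ← lintegral_const_mul 2 (show Measurable fun x => (∫⁻ y, P x y) + ∫⁻ y, P y x from
            hPm.lintegral_prod_right.add hPm'.lintegral_prod_right)]
        refine lintegral_congr fun x => ?_
        have hx : Measurable (P x) := hPm.comp measurable_prodMk_left
        have hx' : Measurable fun y => P y x := hPm.comp measurable_prodMk_right
        rw [lintegral_const_mul 2 (show Measurable fun y => P x y + P y x from hx.add hx'),
          lintegral_add_left hx]
    _ ≤ _ := by
        rw [hswap, ← two_mul, ← mul_assoc]
        norm_num
        gcongr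

theorem lintegral_enorm_rpow_interpolate {u : EuclideanSpace ℝ (Fin 2) → ℝ} (hu : Measurable u)
    {q : ℝ} (hq : 2 ≤ q) :
    ∫⁻ x, ‖u x‖ₑ ^ (4 - 4 / q) ≤
      (∫⁻ x, ‖u x‖ₑ ^ 2) ^ (1 - 2 / q) * (∫⁻ x, ‖u x‖ₑ ^ q) ^ (2 / q) := by
  have hq₀ : 0 < q := by linarith
  have h2q : 2 / q ≤ 1 := by rw [div_le_one hq₀]; exact hq
  have h := ENNReal.lintegral_mul_norm_pow_le (μ := (volume : Measure (EuclideanSpace ℝ (Fin 2))))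
    (f := fun x => ‖u x‖ₑ ^ 2) (g := fun x => ‖u x‖ₑ ^ q)
    (by fun_prop) (by fun_prop) (p := 1 - 2 / q) (q := 2 / q)
    (by linarith) (by positivity) (by ring)
  refine le_of_eq_of_le (lintegral_congr fun x => ?_) h
  rw [← ENNReal.rpow_natCast, ← ENNReal.rpow_mul, ← ENNReal.rpow_mul,
    ← ENNReal.rpow_add_of_nonneg _ _ (mul_nonneg (by simp) (by linarith)) (by positivity)]
  congr 1
  push_cast
  field_simp
  ring

theorem exists_young_bound {q K δ₁ δ₂ : ℝ} (hq₁ : 2 < q) (hq₂ : q < 4) (hK : 0 < K)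
    (hδ₁ : 0 < δ₁) (hδ₂ : 0 < δ₂) :
    ∃ L > (0 : ℝ), ∀ A ≥ (0 : ℝ), ∀ g ≥ (0 : ℝ), ∀ m ≥ (0 : ℝ),
      K * (A ^ (2 / q) * g ^ ((4 - q) / (2 * q)) * m ^ ((3 * q - 4) / (2 * q))) ≤
        δ₁ * A ^ 2 + δ₂ * g + L * m ^ ((3 * q - 4) / (3 * (q - 2))) := by
  have hq₀ : 0 < q := by linarith
  set b := (4 - q) / (2 * q) with hb
  set w := 3 * (q - 2) / (2 * q) with hw
  have hb₀ : 0 < b := div_pos (by linarith) (by linarith)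
  have hw₀ : 0 < w := div_pos (by linarith) (by linarith)
  have hq2 : q - 2 ≠ 0 := by linarith
  have hsum : 1 / q + b + w = 1 := by rw [hb, hw]; field_simp; ring
  set L := (K * (δ₁ ^ (1 / q) * δ₂ ^ b)⁻¹) ^ w⁻¹ with hL
  have hL₀ : 0 < L := by positivity
  refine ⟨L, hL₀, fun A hA g hg m hm => ?_⟩
  set s := (3 * q - 4) / (3 * (q - 2)) with hs
  have hAM := Real.geom_mean_le_arith_mean3_weighted (p₁ := δ₁ * A ^ 2) (p₂ := δ₂ * g)
    (p₃ := L * m ^ s) (one_div_pos.2 hq₀).le hb₀.le hw₀.le (by positivity) (by positivity)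
    (by positivity) hsum
  have hLw : L ^ w = K * (δ₁ ^ (1 / q) * δ₂ ^ b)⁻¹ := by
    rw [hL, ← Real.rpow_mul (by positivity), inv_mul_cancel₀ hw₀.ne', Real.rpow_one]
  have hA' : (A ^ 2) ^ (1 / q) = A ^ (2 / q) := by
    rw [← Real.rpow_natCast, ← Real.rpow_mul hA]; congr 1; push_cast; ring
  have hm' : (m ^ s) ^ w = m ^ ((3 * q - 4) / (2 * q)) := by
    rw [← Real.rpow_mul hm]; congr 1; rw [hs, hw]; field_simp
  rw [Real.mul_rpow hδ₁.le (by positivity), Real.mul_rpow hδ₂.le hg,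
    Real.mul_rpow hL₀.le (by positivity), hLw, hA', hm'] at hAM
  have e : δ₁ ^ (1 / q) * A ^ (2 / q) * (δ₂ ^ b * g ^ b) *
      (K * (δ₁ ^ (1 / q) * δ₂ ^ b)⁻¹ * m ^ ((3 * q - 4) / (2 * q))) =
      K * (A ^ (2 / q) * g ^ b * m ^ ((3 * q - 4) / (2 * q))) := by
    have : δ₁ ^ (1 / q) ≠ 0 := by positivity
    have : δ₂ ^ b ≠ 0 := by positivity
    field_simp
  rw [e] at hAM
  have h1q : 0 < 1 / q := by positivity
  have hle : ∀ c t : ℝ, c ≤ 1 → 0 ≤ t → c * t ≤ t := fun c t hc ht =>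
    mul_le_of_le_one_left ht hc
  linarith [hle (1 / q) (δ₁ * A ^ 2) (by linarith) (by positivity),
    hle b (δ₂ * g) (by linarith) (by positivity),
    hle w (L * m ^ s) (by linarith) (by positivity)]

theorem eq_zero_of_lintegral_enorm_fderiv_sq_eq_zero {u : EuclideanSpace ℝ (Fin 2) → ℝ}
    (hd : Differentiable ℝ u) (hM : ∫⁻ x, ‖u x‖ₑ ^ 2 ≠ ∞)
    (hG : ∫⁻ x, ‖fderiv ℝ u x‖ₑ ^ 2 = 0) : ∫⁻ x, ‖u x‖ₑ ^ 2 = 0 := by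
  have hu : Measurable u := hd.continuous.measurable
  have hu' : Measurable (fderiv ℝ u) := measurable_fderiv ℝ u
  have hz : ∫⁻ x, ‖u x‖ₑ * ‖fderiv ℝ u x‖ₑ = 0 := by
    rw [lintegral_eq_zero_iff (by fun_prop)] at hG ⊢
    filter_upwards [hG] with x hx
    have hx' : ‖fderiv ℝ u x‖ₑ = 0 := by simpa using hx
    simp [hx']
  have h := hardy_plane hd hM
  rw [hz, mul_zero, nonpos_iff_eq_zero, lintegral_eq_zero_iff (by fun_prop)] at h
  rw [lintegral_eq_zero_iff (by fun_prop)]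
  filter_upwards [h] with x hx
  simpa using hx

theorem stmt_19 (q : ℝ) (hq1 : 2 < q) (hq2 : q < 4) :
    ∃ C > (0 : ℝ), ∀ ε > (0 : ℝ), ∃ Cε > (0 : ℝ),
      ∀ u : EuclideanSpace ℝ (Fin 2) → ℝ, Measurable u → Differentiable ℝ u →
        (∫⁻ x, ∫⁻ y, ENNReal.ofReal
            (Real.log (1 + 2 / ‖x - y‖) * (u x) ^ 2 * (u y) ^ 2)) ≤
          ENNReal.ofReal (C * ε ^ q) *
              (∫⁻ x, ENNReal.ofReal (|u x| ^ q)) ^ (2 : ℕ)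
            + ENNReal.ofReal (C * ε ^ ((5 * q - 2) * (q - 2) / ((4 - q) * (q - 1)))) *
              (∫⁻ x, ENNReal.ofReal (‖fderiv ℝ u x‖ ^ 2))
            + ENNReal.ofReal Cε *
              (∫⁻ x, ENNReal.ofReal ((u x) ^ 2)) ^ ((3 * q - 4) / (3 * (q - 2)) : ℝ) := by
  have hq₀ : 0 < q := by linarith
  have hβ₁ : 1 < 4 / q := by rw [lt_div_iff₀ hq₀]; linarith
  have hβ : 4 / q < 2 := by rw [div_lt_iff₀ hq₀]; linarith
  have hs : 0 < (3 * q - 4) / (3 * (q - 2)) := div_pos (by linarith) (by linarith)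
  obtain ⟨K, hK, hpot⟩ := exists_riesz_potential_bound hβ₁ hβ
  refine ⟨1, one_pos, fun ε hε => ?_⟩
  obtain ⟨L, hL, hyoung⟩ := exists_young_bound hq1 hq2 (K := 4 * K) (by positivity)
    (Real.rpow_pos_of_pos hε q)
    (Real.rpow_pos_of_pos hε ((5 * q - 2) * (q - 2) / ((4 - q) * (q - 1))))
  refine ⟨L, hL, fun u hu hd => ?_⟩
  rw [one_mul, one_mul]
  set δ₁ := ε ^ q
  set δ₂ := ε ^ ((5 * q - 2) * (q - 2) / ((4 - q) * (q - 1)))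
  have hδ₁₀ : 0 < δ₁ := Real.rpow_pos_of_pos hε _
  have hδ₂₀ : 0 < δ₂ := Real.rpow_pos_of_pos hε _
  have eA : ∀ x, ENNReal.ofReal (|u x| ^ q) = ‖u x‖ₑ ^ q := fun x => by
    rw [← ENNReal.ofReal_rpow_of_nonneg (abs_nonneg _) hq₀.le, ← Real.norm_eq_abs, ofReal_norm]
  have eG : ∀ x, ENNReal.ofReal (‖fderiv ℝ u x‖ ^ 2) = ‖fderiv ℝ u x‖ₑ ^ 2 := fun x => by
    rw [ENNReal.ofReal_pow (norm_nonneg _), ofReal_norm]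
  have eM : ∀ x, ENNReal.ofReal ((u x) ^ 2) = ‖u x‖ₑ ^ 2 := fun x => by
    rw [← enorm_pow, Real.enorm_of_nonneg (sq_nonneg _)]
  simp only [eA, eG, eM]
  have hint := lintegral_enorm_rpow_interpolate hu hq1.le
  set A := ∫⁻ x, ‖u x‖ₑ ^ q
  set G := ∫⁻ x, ‖fderiv ℝ u x‖ₑ ^ 2
  set M := ∫⁻ x, ‖u x‖ₑ ^ 2 with hMdef
  by_cases hA : A = ∞
  · simp [hA, ENNReal.top_pow, ENNReal.mul_top, hδ₁₀]
  by_cases hG : G = ∞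
  · simp [hG, ENNReal.mul_top, hδ₂₀]
  by_cases hM : M = ∞
  · simp [hM, ENNReal.top_rpow_of_pos hs, ENNReal.mul_top, hL]
  by_cases hM₀ : M = 0
  · have hu₀ : u = 0 := by
      rw [hMdef, lintegral_eq_zero_iff (by fun_prop)] at hM₀
      refine (hd.continuous.ae_eq_iff_eq volume continuous_zero).1 ?_
      filter_upwards [hM₀] with x hx
      simpa using hx
    simp [hu₀]
  have hG₀ : G ≠ 0 := fun h => hM₀ (eq_zero_of_lintegral_enorm_fderiv_sq_eq_zero hd hM h)
  have hm := ENNReal.toReal_pos hM₀ hM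
  have hg := ENNReal.toReal_pos hG₀ hG
  have ha : 0 ≤ A.toReal := ENNReal.toReal_nonneg
  have hB := hpot u hd M.toReal hm G.toReal hg (ENNReal.ofReal_toReal hM).symm
    (ENNReal.ofReal_toReal hG).symm
  refine (lintegral_lintegral_log_kernel_le hu (by linarith) hβ.le hB).trans ?_
  have hY := ENNReal.ofReal_le_ofReal (hyoung A.toReal ha G.toReal hg.le M.toReal hm.le)
  rw [ENNReal.ofReal_add (by positivity) (by positivity),
    ENNReal.ofReal_add (by positivity) (by positivity), ENNReal.ofReal_mul hδ₁₀.le,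
    ENNReal.ofReal_mul hδ₂₀.le, ENNReal.ofReal_mul hL.le, ENNReal.ofReal_pow ha,
    ← ENNReal.ofReal_rpow_of_pos hm, ENNReal.ofReal_toReal hA, ENNReal.ofReal_toReal hG,
    ENNReal.ofReal_toReal hM] at hY
  refine le_trans ?_ hY
  calc _ ≤ 4 * ((M ^ (1 - 2 / q) * A ^ (2 / q)) * _) := by gcongr
    _ = _ := by
      rw [← ENNReal.ofReal_toReal hM, ← ENNReal.ofReal_toReal hA,
        ENNReal.ofReal_rpow_of_pos hm, ENNReal.ofReal_rpow_of_nonneg ha (by positivity),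
        ← ENNReal.ofReal_mul (by positivity), ← ENNReal.ofReal_mul (by positivity),
        ← ENNReal.ofReal_ofNat, ← ENNReal.ofReal_mul (by positivity),
        ENNReal.toReal_ofReal hm.le, ENNReal.toReal_ofReal ha]
      congr 1
      have e1 : (4 / q - 1) / 2 = (4 - q) / (2 * q) := by field_simp
      have e2 : M.toReal ^ ((3 * q - 4) / (2 * q)) =
          M.toReal ^ (1 - 2 / q) * M.toReal ^ (1 / 2 : ℝ) := by
        rw [← Real.rpow_add hm]; congr 1; field_simp; ring
      rw [e1, e2]
      ring
end
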